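/- Let A be a complex unital Banach algebra and a ∈ A. Then a is ag-Drazin invertible if and only if there exists an idempotent p ∈ A with ap = pa such that a + p is invertible in A and ap ∈ A^acc. -/

import Mathlib

open Filter Topology

/-- An element of a complex Banach algebra is quasinilpotent if its spectrum is `{0}`. -/
def IsQuasinilpotent {A : Type*} [NormedRing A] [NormedAlgebra ℂ A] (b : A) : Prop :=
  spectrum ℂ b = {0}

/-- `a` is generalized Drazin invertible. -/
def IsGDrazinInv {A : Type*} [NormedRing A] [NormedAlgebra ℂ A] (a : A) : Prop :=
  ∃ x : A, a * x = x * a ∧ x * a * x = x ∧ IsQuasinilpotent (a - a ^ 2 * x)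

/-- `a ∈ A^acc`: `a - λ1` is generalized Drazin invertible for all nonzero `λ`. -/
def MemAcc {A : Type*} [NormedRing A] [NormedAlgebra ℂ A] (a : A) : Prop :=
  ∀ l : ℂ, l ≠ 0 → IsGDrazinInv (a - l • (1 : A))

/-- `x` is an ag-Drazin inverse of `a`. -/
def IsAgDrazinInverseOf {A : Type*} [NormedRing A] [NormedAlgebra ℂ A] (x a : A) : Prop :=
  a * x = x * a ∧ x * a * x = x ∧ MemAcc (a - a ^ 2 * x)

/-- `a` is ag-Drazin invertible. -/
def IsAgDrazinInv {A : Type*} [NormedRing A] [NormedAlgebra ℂ A] (a : A) : Prop :=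
  ∃ x : A, IsAgDrazinInverseOf x a

/-- The generalized Drazin spectrum. -/
def gDrazinSpectrum {A : Type*} [NormedRing A] [NormedAlgebra ℂ A] (a : A) : Set ℂ :=
  {l : ℂ | ¬ IsGDrazinInv (a - l • (1 : A))}

/-- The ag-Drazin spectrum. -/
def agDrazinSpectrum {A : Type*} [NormedRing A] [NormedAlgebra ℂ A] (a : A) : Set ℂ :=
  {l : ℂ | ¬ IsAgDrazinInv (a - l • (1 : A))}

/-!
An element that commutes with an idempotent `e` acts separately on the ranges of `e` and `1 - e`,
so invertibility, spectra and generalized Drazin inverses may be computed on the two blocks.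

If `u = a + p` is a unit, then `u⁻¹ * (1 - p)` inverts `a` on the range of `1 - p`. Conversely, let
`x` be an ag-Drazin inverse of `a` and put `c = a * (1 - a * x)`. Since `c ∈ A^acc`, the element
`c + 1` has a generalized Drazin inverse `y`. With `e = (c + 1) * y`, the element `c + e` is `c + 1`
on the range of `e`, where `y` inverts it, and `(c + 1) - 1` on the range of `1 - e`, where `c + 1`
is quasinilpotent; so `c + e` is a unit. The required idempotent is `p = (1 - a * x) * e`: the
element `a + p` is `a` on the range of `a * x` and `c + e` on the range of `1 - a * x`. That `e`
commutes with `a` and `x` holds because generalized Drazin inverses lie in the double commutant: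
for `u` commuting with `b` and `z` a generalized Drazin inverse of `b` with quasinilpotent part `m`,
one has `b * z * u * (1 - b * z) = z ^ n * u * m ^ n` for all `n ≥ 1`, which tends to `0`.
-/

/-- The block-diagonal element of the Peirce decomposition along an idempotent `e` that acts as `s`
on the range of `e` and as `t` on the range of `1 - e`. It is meaningful when `e` commutes with `s`
and `t`; these conditions are hypotheses of the lemmas that need them. -/
def peirceSum {A : Type*} [Ring A] (e s t : A) : A :=
  s * e + t * (1 - e)

/-- `x` is an outer inverse of `a` that commutes with `a`: the algebraic conditions shared by
generalized Drazin inverses and ag-Drazin inverses. -/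
structure IsCommOuterInverse {A : Type*} [Ring A] (a x : A) : Prop where
  commute : Commute a x
  mul_mul_self : x * a * x = x

section Ring

variable {A : Type*} [Ring A] {a e p s s' t t' u x : A}

theorem peirceSum_self (e s : A) : peirceSum e s s = s := by
  rw [peirceSum, ← mul_add, add_sub_cancel, mul_one]

theorem peirceSum_sub_peirceSum (e s t s' t' : A) :
    peirceSum e s t - peirceSum e s' t' = peirceSum e (s - s') (t - t') := by
  simp only [peirceSum]
  noncomm_ring

theorem peirceSum_mul_peirceSum (he : IsIdempotentElem e) (hs' : Commute e s')
    (ht' : Commute e t') :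
    peirceSum e s t * peirceSum e s' t' = peirceSum e (s * s') (t * t') := by
  have hes' : s * e * (s' * e) = s * s' * e := by
    rw [mul_assoc, hs'.left_comm, he.eq, mul_assoc]
  have het' : s * e * (t' * (1 - e)) = 0 := by
    rw [mul_assoc, ht'.left_comm, he.mul_one_sub_self, mul_zero, mul_zero]
  have hfs' : t * (1 - e) * (s' * e) = 0 := by
    rw [mul_assoc, ((Commute.one_left s').sub_left hs').left_comm, he.one_sub_mul_self, mul_zero,
      mul_zero]
  have hft' : t * (1 - e) * (t' * (1 - e)) = t * t' * (1 - e) := by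
    rw [mul_assoc, ((Commute.one_left t').sub_left ht').left_comm, he.one_sub.eq, mul_assoc]
  simp only [peirceSum, add_mul, mul_add, hes', het', hfs', hft', add_zero, zero_add]

theorem isUnit_peirceSum (he : IsIdempotentElem e) (hes : Commute e s) (het : Commute e t)
    (hs : IsUnit s) (ht : IsUnit t) : IsUnit (peirceSum e s t) := by
  lift s to Aˣ using hs
  lift t to Aˣ using ht
  refine isUnit_iff_exists.mpr ⟨peirceSum e ↑s⁻¹ ↑t⁻¹, ?_, ?_⟩
  · rw [peirceSum_mul_peirceSum he hes.units_inv_right het.units_inv_right, s.mul_inv, t.mul_inv,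
      peirceSum_self]
  · rw [peirceSum_mul_peirceSum he hes het, s.inv_mul, t.inv_mul, peirceSum_self]

theorem spectrum_peirceSum_subset {R : Type*} [CommSemiring R] [Algebra R A]
    (he : IsIdempotentElem e) (hes : Commute e s) (het : Commute e t) :
    spectrum R (peirceSum e s t) ⊆ spectrum R s ∪ spectrum R t := by
  intro r hr
  by_contra hst
  simp only [Set.mem_union, not_or, spectrum.notMem_iff] at hst
  rw [spectrum.mem_iff, ← peirceSum_self e (algebraMap R A r), peirceSum_sub_peirceSum] at hr
  have hre : Commute e (algebraMap R A r) := Algebra.commute_algebraMap_right r e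
  exact hr (isUnit_peirceSum he (hre.sub_right hes) (hre.sub_right het) hst.1 hst.2)

theorem sub_sq_mul_eq (a x : A) : a - a ^ 2 * x = a * (1 - a * x) := by
  noncomm_ring

theorem commute_of_mul_mul_one_sub_eq_zero (heu : e * u * (1 - e) = 0)
    (hue : (1 - e) * u * e = 0) : Commute u e := by
  rw [mul_sub, mul_one, sub_eq_zero] at heu
  rw [sub_mul, sub_mul, one_mul, sub_eq_zero] at hue
  exact hue.trans heu.symm

namespace IsCommOuterInverse

theorem isIdempotentElem (hx : IsCommOuterInverse a x) : IsIdempotentElem (a * x) := by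
  rw [IsIdempotentElem, mul_assoc, ← mul_assoc x, hx.mul_mul_self]

theorem commute_mul_self (hx : IsCommOuterInverse a x) : Commute a (a * x) :=
  (Commute.refl a).mul_right hx.commute

theorem mul_self_mul (hx : IsCommOuterInverse a x) : a * x * x = x := by
  rw [hx.commute.eq, hx.mul_mul_self]

theorem pow_succ_mul_pow_succ (hx : IsCommOuterInverse a x) (n : ℕ) :
    a ^ (n + 1) * x ^ (n + 1) = a * x := by
  rw [← hx.commute.mul_pow, hx.isIdempotentElem.pow_succ_eq]

theorem mul_one_sub_pow_succ (hx : IsCommOuterInverse a x) (n : ℕ) :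
    (a * (1 - a * x)) ^ (n + 1) = a ^ (n + 1) * (1 - a * x) := by
  rw [((Commute.one_right a).sub_right hx.commute_mul_self).mul_pow,
    hx.isIdempotentElem.one_sub.pow_succ_eq]

theorem commute_of_commute_mul (hx : IsCommOuterInverse a x) (hua : Commute u a)
    (hue : Commute u (a * x)) : Commute u x := by
  calc u * x = u * (a * x) * x := by rw [mul_assoc, hx.mul_self_mul]
    _ = x * (a * u) * x := by rw [hue.eq, hx.commute.eq, mul_assoc x a u]
    _ = x * (u * (a * x)) := by rw [← hua.eq]; simp only [mul_assoc]
    _ = x * u := by rw [hue.eq, ← mul_assoc, ← mul_assoc, hx.mul_mul_self]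

theorem isUnit_peirceSum (hx : IsCommOuterInverse a x) (het : Commute (a * x) t)
    (ht : IsUnit t) : IsUnit (peirceSum (a * x) a t) := by
  lift t to Aˣ using ht
  have hone : peirceSum (a * x) (a * x) 1 = 1 := by
    rw [peirceSum, hx.isIdempotentElem.eq, one_mul, add_sub_cancel]
  have hex : Commute (a * x) x := hx.commute.mul_left (Commute.refl x)
  refine isUnit_iff_exists.mpr ⟨peirceSum (a * x) x ↑t⁻¹, ?_, ?_⟩
  · rw [peirceSum_mul_peirceSum hx.isIdempotentElem hex het.units_inv_right, t.mul_inv, hone]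
  · rw [peirceSum_mul_peirceSum hx.isIdempotentElem hx.commute_mul_self.symm het, t.inv_mul,
      ← hx.commute.eq, hone]

theorem isUnit_add_one_sub_mul (hx : IsCommOuterInverse a x) (hcomm : Commute (a * x) e)
    (hunit : IsUnit (a * (1 - a * x) + e)) : IsUnit (a + (1 - a * x) * e) := by
  have hec : Commute (a * x) (a * (1 - a * x)) :=
    hx.commute_mul_self.symm.mul_right ((Commute.one_right _).sub_right (Commute.refl _))
  have hsplit : a + (1 - a * x) * e = peirceSum (a * x) a (a * (1 - a * x) + e) := by
    rw [peirceSum, add_mul, mul_assoc a (1 - a * x), hx.isIdempotentElem.one_sub.eq,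
      ((Commute.one_left e).sub_left hcomm).eq]
    noncomm_ring
  rw [hsplit]
  exact hx.isUnit_peirceSum (hec.add_right hcomm) hunit

end IsCommOuterInverse

theorem exists_isCommOuterInverse_of_isUnit_add (hp : IsIdempotentElem p) (hap : Commute a p)
    (hunit : IsUnit (a + p)) : ∃ x, IsCommOuterInverse a x ∧ a * x = 1 - p := by
  obtain ⟨u, hu⟩ := hunit
  have hau : Commute a ↑u⁻¹ :=
    Commute.units_inv_right (hu ▸ (Commute.refl a).add_right hap)
  have hx : a * (↑u⁻¹ * (1 - p)) = 1 - p := by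
    have hblock : a * (1 - p) = u * (1 - p) := by
      rw [hu, add_mul, hp.mul_one_sub_self, add_zero]
    rw [hau.left_comm, hblock, u.inv_mul_cancel_left]
  refine ⟨↑u⁻¹ * (1 - p), ⟨hau.mul_right ((Commute.one_right a).sub_right hap), ?_⟩, hx⟩
  rw [mul_assoc, hx, mul_assoc, hp.one_sub.eq]

theorem isCommOuterInverse_peirceSum {x y : A} (he : IsIdempotentElem e) (hes : Commute e s)
    (het : Commute e t) (hex : Commute e x) (hey : Commute e y) (hx : IsCommOuterInverse s x)
    (hy : IsCommOuterInverse t y) :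
    IsCommOuterInverse (peirceSum e s t) (peirceSum e x y) where
  commute := by
    rw [Commute, SemiconjBy, peirceSum_mul_peirceSum he hex hey,
      peirceSum_mul_peirceSum he hes het, hx.commute.eq, hy.commute.eq]
  mul_mul_self := by
    rw [peirceSum_mul_peirceSum he hes het, peirceSum_mul_peirceSum he hex hey, hx.mul_mul_self,
      hy.mul_mul_self]

end Ring

section NormedAlgebra

variable {A : Type*} [NormedRing A] [NormedAlgebra ℂ A] {a b c e m s t u w x : A}

theorem isGDrazinInv_iff :
    IsGDrazinInv a ↔
      ∃ x, IsCommOuterInverse a x ∧ IsQuasinilpotent (a * (1 - a * x)) := by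
  simp only [IsGDrazinInv, sub_sq_mul_eq]
  exact exists_congr fun x =>
    ⟨fun ⟨hax, hxax, hm⟩ => ⟨⟨hax, hxax⟩, hm⟩, fun ⟨⟨hax, hxax⟩, hm⟩ => ⟨hax, hxax, hm⟩⟩

theorem isAgDrazinInv_iff :
    IsAgDrazinInv a ↔ ∃ x, IsCommOuterInverse a x ∧ MemAcc (a * (1 - a * x)) := by
  simp only [IsAgDrazinInv, IsAgDrazinInverseOf, sub_sq_mul_eq]
  exact exists_congr fun x =>
    ⟨fun ⟨hax, hxax, hacc⟩ => ⟨⟨hax, hxax⟩, hacc⟩, fun ⟨⟨hax, hxax⟩, hacc⟩ => ⟨hax, hxax, hacc⟩⟩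

theorem IsQuasinilpotent.nontrivial (hm : IsQuasinilpotent m) : Nontrivial A := by
  by_contra hA
  rw [not_nontrivial_iff_subsingleton] at hA
  exact Set.singleton_ne_empty (0 : ℂ) (hm.symm.trans (spectrum.of_subsingleton m))

theorem IsQuasinilpotent.isUnit_sub_one (hm : IsQuasinilpotent m) : IsUnit (m - 1) := by
  have hone : (1 : ℂ) ∉ spectrum ℂ m := by
    rw [hm]
    exact one_ne_zero
  rwa [spectrum.notMem_iff, map_one, IsUnit.sub_iff] at hone

theorem IsGDrazinInv.nontrivial (ha : IsGDrazinInv a) : Nontrivial A :=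
  let ⟨_, _, _, hm⟩ := ha
  hm.nontrivial

theorem isGDrazinInv_of_isUnit [Nontrivial A] (ha : IsUnit a) : IsGDrazinInv a := by
  lift a to Aˣ using ha
  refine isGDrazinInv_iff.mpr ⟨↑a⁻¹, ⟨(Commute.refl (a : A)).units_inv_right, ?_⟩, ?_⟩
  · rw [a.inv_mul, one_mul]
  · rw [a.mul_inv, sub_self, mul_zero]
    exact spectrum.zero_eq

variable [CompleteSpace A]

theorem isQuasinilpotent_of_spectrum_subset [Nontrivial A] (hm : spectrum ℂ m ⊆ {0}) :
    IsQuasinilpotent m :=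
  (spectrum.nonempty m).subset_singleton_iff.mp hm

theorem isQuasinilpotent_peirceSum (he : IsIdempotentElem e) (hes : Commute e s) (het : Commute e t)
    (hs : IsQuasinilpotent s) (ht : IsQuasinilpotent t) :
    IsQuasinilpotent (peirceSum e s t) := by
  have := hs.nontrivial
  have hsub : spectrum ℂ (peirceSum e s t) ⊆ spectrum ℂ s ∪ spectrum ℂ t :=
    spectrum_peirceSum_subset he hes het
  rw [hs, ht, Set.union_self] at hsub
  exact isQuasinilpotent_of_spectrum_subset hsub

namespace IsQuasinilpotent

theorem eventually_norm_pow_le (hm : IsQuasinilpotent m) {ε : ℝ} (hε : 0 < ε) :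
    ∀ᶠ n : ℕ in atTop, ‖m ^ n‖ ≤ ε ^ n := by
  have hradius : spectralRadius ℂ m = 0 := by simp [spectralRadius, show spectrum ℂ m = {0} from hm]
  have hgelfand := spectrum.pow_norm_pow_one_div_tendsto_nhds_spectralRadius m
  rw [hradius] at hgelfand
  filter_upwards [hgelfand.eventually_lt_const (ENNReal.ofReal_pos.mpr hε), eventually_ne_atTop 0]
    with n hroot hn
  rw [ENNReal.ofReal_lt_ofReal_iff hε, one_div] at hroot
  calc ‖m ^ n‖ = (‖m ^ n‖ ^ (n⁻¹ : ℝ)) ^ n := (Real.rpow_inv_natCast_pow (norm_nonneg _) hn).symm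
    _ ≤ ε ^ n := by gcongr

theorem tendsto_pow_mul_norm_pow (hm : IsQuasinilpotent m) {K : ℝ} (hK : 0 ≤ K) :
    Tendsto (fun n : ℕ => K ^ n * ‖m ^ n‖) atTop (𝓝 0) := by
  have hratio : K * (K + 1)⁻¹ < 1 := by
    rw [← div_eq_mul_inv, div_lt_one (by positivity)]
    exact lt_add_one K
  refine squeeze_zero' (.of_forall fun n => by positivity) ?_
    (tendsto_pow_atTop_nhds_zero_of_lt_one (by positivity) hratio)
  filter_upwards [hm.eventually_norm_pow_le (ε := (K + 1)⁻¹) (by positivity)] with n hn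
  rw [mul_pow]
  gcongr

theorem eq_zero_of_norm_le (hm : IsQuasinilpotent m) {C K : ℝ} (hK : 0 ≤ K)
    (hw : ∀ n : ℕ, ‖w‖ ≤ C * (K ^ (n + 1) * ‖m ^ (n + 1)‖)) : w = 0 := by
  have hlim : Tendsto (fun n : ℕ => C * (K ^ (n + 1) * ‖m ^ (n + 1)‖)) atTop (𝓝 0) := by
    simpa only [mul_zero] using
      ((tendsto_add_atTop_iff_nat 1).mpr (hm.tendsto_pow_mul_norm_pow hK)).const_mul C
  exact norm_le_zero_iff.mp (ge_of_tendsto' hlim hw)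

end IsQuasinilpotent

namespace IsCommOuterInverse

theorem mul_mul_one_sub_eq_zero (hx : IsCommOuterInverse a x)
    (hm : IsQuasinilpotent (a * (1 - a * x))) (hu : Commute u a) :
    a * x * u * (1 - a * x) = 0 := by
  refine hm.eq_zero_of_norm_le (C := ‖u‖) (norm_nonneg x) fun n => ?_
  have hpow : a * x * u * (1 - a * x) = x ^ (n + 1) * u * (a * (1 - a * x)) ^ (n + 1) := by
    rw [hx.mul_one_sub_pow_succ, ← hx.pow_succ_mul_pow_succ n, (hx.commute.pow_pow _ _).eq,
      mul_assoc (x ^ (n + 1)), ← (hu.pow_right _).eq]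
    simp only [mul_assoc]
  calc ‖a * x * u * (1 - a * x)‖
      ≤ ‖x ^ (n + 1)‖ * ‖u‖ * ‖(a * (1 - a * x)) ^ (n + 1)‖ := hpow ▸ norm_mul₃_le
    _ ≤ ‖x‖ ^ (n + 1) * ‖u‖ * ‖(a * (1 - a * x)) ^ (n + 1)‖ := by
      gcongr
      exact norm_pow_le' x n.succ_pos
    _ = ‖u‖ * (‖x‖ ^ (n + 1) * ‖(a * (1 - a * x)) ^ (n + 1)‖) := by ring

theorem one_sub_mul_mul_eq_zero (hx : IsCommOuterInverse a x)
    (hm : IsQuasinilpotent (a * (1 - a * x))) (hu : Commute u a) :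
    (1 - a * x) * u * (a * x) = 0 := by
  refine hm.eq_zero_of_norm_le (C := ‖u‖) (norm_nonneg x) fun n => ?_
  have hpow : (1 - a * x) * u * (a * x) = (a * (1 - a * x)) ^ (n + 1) * u * x ^ (n + 1) := by
    have hcomm : Commute (a ^ (n + 1)) (1 - a * x) :=
      ((Commute.one_right a).sub_right hx.commute_mul_self).pow_left _
    rw [hx.mul_one_sub_pow_succ, hcomm.eq, mul_assoc (1 - a * x) (a ^ (n + 1)),
      ← (hu.pow_right _).eq, ← hx.pow_succ_mul_pow_succ n]
    simp only [mul_assoc]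
  calc ‖(1 - a * x) * u * (a * x)‖
      ≤ ‖(a * (1 - a * x)) ^ (n + 1)‖ * ‖u‖ * ‖x ^ (n + 1)‖ := hpow ▸ norm_mul₃_le
    _ ≤ ‖(a * (1 - a * x)) ^ (n + 1)‖ * ‖u‖ * ‖x‖ ^ (n + 1) := by
      gcongr
      exact norm_pow_le' x n.succ_pos
    _ = ‖u‖ * (‖x‖ ^ (n + 1) * ‖(a * (1 - a * x)) ^ (n + 1)‖) := by ring

theorem commute_mul_of_isQuasinilpotent (hx : IsCommOuterInverse a x)
    (hm : IsQuasinilpotent (a * (1 - a * x))) (hu : Commute u a) : Commute u (a * x) :=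
  commute_of_mul_mul_one_sub_eq_zero (hx.mul_mul_one_sub_eq_zero hm hu)
    (hx.one_sub_mul_mul_eq_zero hm hu)

theorem commute_of_isQuasinilpotent (hx : IsCommOuterInverse a x)
    (hm : IsQuasinilpotent (a * (1 - a * x))) (hu : Commute u a) : Commute u x :=
  hx.commute_of_commute_mul hu (hx.commute_mul_of_isQuasinilpotent hm hu)

end IsCommOuterInverse

theorem isGDrazinInv_peirceSum (he : IsIdempotentElem e) (hes : Commute e s) (het : Commute e t)
    (hs : IsGDrazinInv s) (ht : IsGDrazinInv t) : IsGDrazinInv (peirceSum e s t) := by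
  obtain ⟨x, hx, hsx⟩ := isGDrazinInv_iff.mp hs
  obtain ⟨y, hy, hty⟩ := isGDrazinInv_iff.mp ht
  have hex : Commute e x := hx.commute_of_isQuasinilpotent hsx hes
  have hey : Commute e y := hy.commute_of_isQuasinilpotent hty het
  have hes' : Commute e (1 - s * x) := (Commute.one_right e).sub_right (hes.mul_right hex)
  have het' : Commute e (1 - t * y) := (Commute.one_right e).sub_right (het.mul_right hey)
  refine isGDrazinInv_iff.mpr
    ⟨peirceSum e x y, isCommOuterInverse_peirceSum he hes het hex hey hx hy, ?_⟩
  rw [peirceSum_mul_peirceSum he hex hey, ← peirceSum_self e 1, peirceSum_sub_peirceSum,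
    peirceSum_mul_peirceSum he hes' het']
  exact isQuasinilpotent_peirceSum he (hes.mul_right hes') (het.mul_right het') hsx hty

theorem IsGDrazinInv.exists_isIdempotentElem_isUnit_sub_one_sub (hb : IsGDrazinInv b) :
    ∃ e, IsIdempotentElem e ∧ (∀ u, Commute u b → Commute u e) ∧ IsUnit (b - (1 - e)) := by
  obtain ⟨y, hy, hm⟩ := isGDrazinInv_iff.mp hb
  refine ⟨b * y, hy.isIdempotentElem, fun u => hy.commute_mul_of_isQuasinilpotent hm, ?_⟩
  have hsplit : b - (1 - b * y) = peirceSum (b * y) b (b * (1 - b * y) - 1) := by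
    rw [peirceSum, sub_mul, mul_assoc b (1 - b * y), hy.isIdempotentElem.one_sub.eq]
    noncomm_ring
  have hcomm : Commute (b * y) (b * (1 - b * y) - 1) :=
    (hy.commute_mul_self.symm.mul_right
      ((Commute.one_right _).sub_right (Commute.refl _))).sub_right (Commute.one_right _)
  rw [hsplit]
  exact hy.isUnit_peirceSum hcomm hm.isUnit_sub_one

theorem MemAcc.exists_isIdempotentElem_isUnit_add (hc : MemAcc c) :
    ∃ e, IsIdempotentElem e ∧ (∀ u, Commute u c → Commute u e) ∧ IsUnit (c + e) := by
  have hc1 : IsGDrazinInv (c + 1) := by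
    simpa only [neg_smul, one_smul, sub_neg_eq_add] using hc (-1) (neg_ne_zero.mpr one_ne_zero)
  obtain ⟨e, he, hcomm, hunit⟩ := hc1.exists_isIdempotentElem_isUnit_sub_one_sub
  refine ⟨e, he, fun u hu => hcomm u (hu.add_right (Commute.one_right u)), ?_⟩
  rwa [sub_sub_eq_add_sub, add_right_comm, add_sub_cancel_right] at hunit

theorem MemAcc.mul_isIdempotentElem (hc : MemAcc c) (he : IsIdempotentElem e)
    (hce : Commute c e) : MemAcc (c * e) := by
  intro l hl
  have := (hc l hl).nontrivial
  have hscalar : Commute e (l • (1 : A)) := (Commute.one_right e).smul_right l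
  have hunit : IsUnit (-(l • (1 : A))) := (isUnit_one.smul (Units.mk0 l hl)).neg
  have hsplit : c * e - l • (1 : A) = peirceSum e (c - l • (1 : A)) (-(l • (1 : A))) := by
    rw [peirceSum]
    noncomm_ring
  rw [hsplit]
  exact isGDrazinInv_peirceSum he (hce.symm.sub_right hscalar) hscalar.neg_right (hc l hl)
    (isGDrazinInv_of_isUnit hunit)

end NormedAlgebra

theorem agDrazin_iff_exists_idem_unit_comm {A : Type*} [NormedRing A] [NormedAlgebra ℂ A]
    [CompleteSpace A] (a : A) :
    IsAgDrazinInv a ↔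
      ∃ p : A, p * p = p ∧ a * p = p * a ∧ IsUnit (a + p) ∧ MemAcc (a * p) := by
  rw [isAgDrazinInv_iff]
  constructor
  · rintro ⟨x, hx, hacc⟩
    obtain ⟨e, he, hcomm, hunit⟩ := hacc.exists_isIdempotentElem_isUnit_add
    have haq : Commute a (1 - a * x) := (Commute.one_right a).sub_right hx.commute_mul_self
    have hqc : Commute (1 - a * x) (a * (1 - a * x)) := haq.symm.mul_right (Commute.refl _)
    have hae : Commute a e := hcomm a ((Commute.refl a).mul_right haq)
    have hqe : Commute (1 - a * x) e := hcomm _ hqc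
    have hxe : Commute (a * x) e := by
      simpa only [sub_sub_cancel] using (Commute.one_left e).sub_left hqe
    refine ⟨(1 - a * x) * e, hx.isIdempotentElem.one_sub.mul_of_commute hqe he,
      haq.mul_right hae, hx.isUnit_add_one_sub_mul hxe hunit, ?_⟩
    rw [← mul_assoc]
    exact hacc.mul_isIdempotentElem he (hae.mul_left hqe)
  · rintro ⟨p, hp, hap, hunit, hacc⟩
    obtain ⟨x, hx, hax⟩ := exists_isCommOuterInverse_of_isUnit_add hp hap hunit
    exact ⟨x, hx, by rwa [hax, sub_sub_cancel]⟩
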